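/- For every real a > 0 there exists a constant C > 0 such that for all real λ ≥ 1: | Γ′(a + iλ) / Γ(a + iλ) − Γ′(iλ) / Γ(iλ) | ≤ C / λ, where Γ is the complex Gamma function and Γ′ denotes its complex derivative (Γ is differentiable and nonvanishing at the points iλ and a + iλ for real λ ≥ 1). -/

import Mathlib

/-!
Logarithmically differentiating Euler's product for `Γ` gives Gauss's limit
`ψ(s) = lim (log n - ∑_{j ≤ n} 1 / (s + j))` for the digamma function `ψ = Γ'/Γ`. Hence
`ψ(t) - ψ(s) = ∑ (t - s) / ((s + j) (t + j))`. When `Re s ≥ 0`, `|s + j|` is comparable to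
`|s| + j`, and `|s + j| ≤ (1 + |t - s|) |t + j|` as soon as `|t + j| ≥ 1`, so the series is
`O(∑ 1 / (|s| + j)²) = O(1 / |s|)`.
-/

open Complex Filter MeasureTheory Metric
open scoped Topology

section LimitsOfHolomorphicFunctions

variable {ι E : Type*} [NormedAddCommGroup E] [NormedSpace ℂ E] {l : Filter ι}
  [l.IsCountablyGenerated] {F : ι → ℂ → E} {f : ℂ → E} {c : ℂ} {R M : ℝ}

lemma tendsto_circleIntegral_of_norm_le (hR : 0 ≤ R)
    (hF : ∀ᶠ i in l, ContinuousOn (F i) (sphere c R))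
    (hM : ∀ᶠ i in l, ∀ w ∈ sphere c R, ‖F i w‖ ≤ M)
    (hlim : ∀ w ∈ sphere c R, Tendsto (F · w) l (𝓝 (f w))) :
    Tendsto (fun i => ∮ w in C(c, R), F i w) l (𝓝 (∮ w in C(c, R), f w)) := by
  have hmem (θ : ℝ) : circleMap c R θ ∈ sphere c R := circleMap_mem_sphere c hR θ
  refine intervalIntegral.tendsto_integral_filter_of_dominated_convergence (fun _ => R * M)
    ?_ ?_ intervalIntegrable_const (ae_of_all _ fun θ _ => (hlim _ (hmem θ)).const_smul _)
  · filter_upwards [hF] with i hi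
    have hderiv : Continuous (deriv (circleMap c R)) := by
      simp only [funext (deriv_circleMap c R)]
      fun_prop
    exact (hderiv.smul (hi.comp_continuous (continuous_circleMap c R) hmem)).aestronglyMeasurable
  · filter_upwards [hM] with i hi
    refine ae_of_all _ fun θ _ => ?_
    rw [norm_smul, deriv_circleMap, norm_mul, norm_I, mul_one, norm_circleMap_zero,
      abs_of_nonneg hR]
    exact mul_le_mul_of_nonneg_left (hi _ (hmem θ)) hR

lemma tendsto_deriv_of_norm_le [CompleteSpace E] {U : Set ℂ} (hU : IsOpen U) (hR : 0 < R)
    (hcU : closedBall c R ⊆ U) (hF : ∀ᶠ i in l, DifferentiableOn ℂ (F i) U)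
    (hf : DifferentiableOn ℂ f U) (hM : ∀ᶠ i in l, ∀ w ∈ sphere c R, ‖F i w‖ ≤ M)
    (hlim : ∀ w ∈ sphere c R, Tendsto (F · w) l (𝓝 (f w))) :
    Tendsto (fun i => deriv (F i) c) l (𝓝 (deriv f c)) := by
  have hne (w : ℂ) (hw : w ∈ sphere c R) : (w - c) ^ 2 ≠ 0 :=
    pow_ne_zero _ (sub_ne_zero.2 (ne_of_mem_sphere hw hR.ne'))
  have hcauchy : Tendsto (fun i => cderiv R (F i) c) l (𝓝 (cderiv R f c)) := by
    refine (tendsto_circleIntegral_of_norm_le (M := (R ^ 2)⁻¹ * M) hR.le ?_ ?_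
      fun w hw => (hlim w hw).const_smul _).const_smul _
    · filter_upwards [hF] with i hi
      have hkernel : ContinuousOn (fun w : ℂ => ((w - c) ^ 2)⁻¹) (sphere c R) :=
        ContinuousOn.inv₀ (by fun_prop) hne
      exact hkernel.smul (hi.continuousOn.mono (sphere_subset_closedBall.trans hcU))
    · filter_upwards [hM] with i hi w hw
      rw [norm_smul, norm_inv, norm_pow, mem_sphere_iff_norm.1 hw]
      exact mul_le_mul_of_nonneg_left (hi w hw) (by positivity)
  rw [← cderiv_eq_deriv hU hf hR hcU]
  refine hcauchy.congr' ?_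
  filter_upwards [hF] with i hi
  exact cderiv_eq_deriv hU hi hR hcU

end LimitsOfHolomorphicFunctions

section GammaSeq

variable {s : ℂ} {n : ℕ}

lemma ne_neg_natCast_of_re_pos (hs : 0 < s.re) (m : ℕ) : s ≠ -m := by
  rintro rfl
  have : (0 : ℝ) ≤ m := m.cast_nonneg
  simp only [neg_re, natCast_re] at hs
  linarith

lemma norm_GammaSeq_le_Gamma_re (hs : 0 < s.re) (hn : n ≠ 0) :
    ‖GammaSeq s n‖ ≤ Real.Gamma s.re := by
  have hint := Real.GammaIntegral_convergent hs
  have hle (x : ℝ) (hx : x ∈ Set.Ioc (0 : ℝ) n) :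
      ‖(((1 - x / n) ^ n : ℝ) : ℂ) * (x : ℂ) ^ (s - 1)‖ ≤ Real.exp (-x) * x ^ (s.re - 1) := by
    have hbase : 0 ≤ 1 - x / n := sub_nonneg.2 (div_le_one_of_le₀ hx.2 n.cast_nonneg)
    rw [norm_mul, norm_real, Real.norm_of_nonneg (pow_nonneg hbase n),
      norm_cpow_eq_rpow_re_of_pos hx.1, sub_re, one_re]
    exact mul_le_mul_of_nonneg_right (Real.one_sub_div_pow_le_exp_neg hx.2)
      (Real.rpow_nonneg hx.1.le _)
  calc ‖GammaSeq s n‖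
      = ‖∫ x : ℝ in 0..n, (((1 - x / n) ^ n : ℝ) : ℂ) * (x : ℂ) ^ (s - 1)‖ := by
        rw [GammaSeq_eq_approx_Gamma_integral hs hn]
    _ ≤ ∫ x : ℝ in 0..n, Real.exp (-x) * x ^ (s.re - 1) :=
        intervalIntegral.norm_integral_le_of_norm_le n.cast_nonneg (ae_of_all _ hle)
          ((intervalIntegrable_iff_integrableOn_Ioc_of_le n.cast_nonneg).2
            (hint.mono_set Set.Ioc_subset_Ioi_self))
    _ = ∫ x in Set.Ioc (0 : ℝ) n, Real.exp (-x) * x ^ (s.re - 1) :=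
        intervalIntegral.integral_of_le n.cast_nonneg
    _ ≤ ∫ x in Set.Ioi (0 : ℝ), Real.exp (-x) * x ^ (s.re - 1) := by
        refine setIntegral_mono_set hint ?_ Set.Ioc_subset_Ioi_self.eventuallyLE
        filter_upwards [ae_restrict_mem measurableSet_Ioi] with x hx
        exact mul_nonneg (Real.exp_nonneg _) (Real.rpow_nonneg (le_of_lt hx) _)
    _ = Real.Gamma s.re := (Real.Gamma_eq_integral hs).symm

lemma differentiableAt_GammaSeq (hs : ∀ m : ℕ, s ≠ -m) (hn : n ≠ 0) :
    DifferentiableAt ℂ (GammaSeq · n) s := by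
  have hpow : DifferentiableAt ℂ (fun z : ℂ => (n : ℂ) ^ z) s :=
    differentiableAt_id.const_cpow (Or.inl (Nat.cast_ne_zero.2 hn))
  have hprod : ∏ j ∈ Finset.range (n + 1), (s + j) ≠ 0 :=
    Finset.prod_ne_zero_iff.2 fun j _ => eq_neg_iff_add_eq_zero.not.1 (hs j)
  unfold GammaSeq
  exact (hpow.mul_const _).fun_div (by fun_prop) hprod

lemma tendsto_deriv_GammaSeq_of_re_pos (hs : 0 < s.re) :
    Tendsto (fun n : ℕ => deriv (GammaSeq · n) s) atTop (𝓝 (deriv Gamma s)) := by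
  have hU : IsOpen {z : ℂ | 0 < z.re} := isOpen_lt continuous_const continuous_re
  obtain ⟨R, hR, hball⟩ := nhds_basis_closedBall.mem_iff.1 (hU.mem_nhds hs)
  have hsphere : sphere s R ⊆ {z : ℂ | 0 < z.re} := sphere_subset_closedBall.trans hball
  have hcont : ContinuousOn (fun z : ℂ => Real.Gamma z.re) (sphere s R) := by
    intro z hz
    have hpole (m : ℕ) : z.re ≠ -m := fun h =>
      (hsphere hz).not_ge (h ▸ neg_nonpos.2 m.cast_nonneg)
    exact ((Real.differentiableAt_Gamma hpole).continuousAt.comp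
      continuous_re.continuousAt).continuousWithinAt
  obtain ⟨M, hM⟩ := (isCompact_sphere s R).exists_bound_of_continuousOn hcont
  refine tendsto_deriv_of_norm_le (M := M) hU hR hball ?_ ?_ ?_
    fun w _ => GammaSeq_tendsto_Gamma w
  · filter_upwards [eventually_ne_atTop 0] with n hn z hz
    exact (differentiableAt_GammaSeq (ne_neg_natCast_of_re_pos hz) hn).differentiableWithinAt
  · exact fun z hz =>
      (differentiableAt_Gamma z (ne_neg_natCast_of_re_pos hz)).differentiableWithinAt
  · filter_upwards [eventually_ne_atTop 0] with n hn w hw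
    exact (norm_GammaSeq_le_Gamma_re (hsphere hw) hn).trans ((Real.le_norm_self _).trans (hM w hw))

end GammaSeq

section Digamma

variable {s : ℂ}

/-- The `n`-th approximant in Gauss's limit formula for `Complex.digamma`; it is the logarithmic
derivative of `Complex.GammaSeq · n`. At a pole `s = -j` with `j ≤ n` the `j`-th summand is the junk
value `0⁻¹ = 0`. -/
noncomputable def digammaSeq (s : ℂ) (n : ℕ) : ℂ :=
  log n - ∑ j ∈ Finset.range (n + 1), (s + j)⁻¹

lemma logDeriv_GammaSeq (hs : ∀ m : ℕ, s ≠ -m) {n : ℕ} (hn : n ≠ 0) :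
    logDeriv (GammaSeq · n) s = digammaSeq s n := by
  have hn' : (n : ℂ) ≠ 0 := Nat.cast_ne_zero.2 hn
  have hpow : HasDerivAt (fun z : ℂ => (n : ℂ) ^ z) ((n : ℂ) ^ s * log n) s := by
    simpa only [id, mul_one] using (hasDerivAt_id s).const_cpow (Or.inl hn')
  have hpow_ne : (n : ℂ) ^ s ≠ 0 := mt (fun h => ((cpow_eq_zero_iff _ _).1 h).1) hn'
  have hfact : (n.factorial : ℂ) ≠ 0 := Nat.cast_ne_zero.2 n.factorial_ne_zero
  have hfactor (j : ℕ) : s + j ≠ 0 := eq_neg_iff_add_eq_zero.not.1 (hs j)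
  have hnum : logDeriv (fun z : ℂ => (n : ℂ) ^ z * n.factorial) s = log n := by
    rw [logDeriv_mul_const _ _ hfact, logDeriv_apply, hpow.deriv, mul_div_cancel_left₀ _ hpow_ne]
  have hden : logDeriv (fun z : ℂ => ∏ j ∈ Finset.range (n + 1), (z + j)) s =
      ∑ j ∈ Finset.range (n + 1), (s + j)⁻¹ := by
    rw [logDeriv_prod (fun j _ => hfactor j) fun j _ => by fun_prop]
    simp only [logDeriv_apply, deriv_add_const, deriv_id'', one_div]
  unfold GammaSeq digammaSeq
  rw [logDeriv_div (f := fun z : ℂ => (n : ℂ) ^ z * n.factorial) s (mul_ne_zero hpow_ne hfact)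
    (Finset.prod_ne_zero_iff.2 fun j _ => hfactor j) (hpow.differentiableAt.mul_const _)
    (by fun_prop), hnum, hden]

lemma digammaSeq_add_one (s : ℂ) (n : ℕ) :
    digammaSeq (s + 1) n = digammaSeq s n + s⁻¹ - (s + (n + 1 : ℕ))⁻¹ := by
  have hshift : ∑ j ∈ Finset.range (n + 1), (s + 1 + j)⁻¹ + s⁻¹ =
      ∑ j ∈ Finset.range (n + 1), (s + j)⁻¹ + (s + (n + 1 : ℕ))⁻¹ := by
    rw [← Finset.sum_range_succ (fun j : ℕ => (s + j)⁻¹), Finset.sum_range_succ' _ (n + 1)]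
    simp only [Nat.cast_succ, Nat.cast_zero, add_zero, add_assoc, add_comm (1 : ℂ)]
  unfold digammaSeq
  linear_combination -hshift

lemma tendsto_digammaSeq_of_re_pos (hs : 0 < s.re) :
    Tendsto (digammaSeq s) atTop (𝓝 (digamma s)) := by
  have hlogDeriv := (tendsto_deriv_GammaSeq_of_re_pos hs).div (GammaSeq_tendsto_Gamma s)
    (Gamma_ne_zero_of_re_pos hs)
  rw [digamma_def, logDeriv_apply]
  refine hlogDeriv.congr' ?_
  filter_upwards [eventually_ne_atTop 0] with n hn
  rw [← logDeriv_GammaSeq (ne_neg_natCast_of_re_pos hs) hn]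
  rfl

theorem tendsto_digammaSeq (hs : ∀ m : ℕ, s ≠ -m) :
    Tendsto (digammaSeq s) atTop (𝓝 (digamma s)) := by
  obtain ⟨k, hk⟩ := exists_nat_gt (-s.re)
  induction k generalizing s with
  | zero => exact tendsto_digammaSeq_of_re_pos (by simpa using hk)
  | succ k ih =>
    have hs' (m : ℕ) : s + 1 ≠ -m := fun h => hs (m + 1) (by push_cast; linear_combination h)
    have htail : Tendsto (fun n : ℕ => (s + (n + 1 : ℕ))⁻¹) atTop (𝓝 0) :=
      tendsto_inv₀_cobounded.comp ((tendsto_const_add_cobounded s).comp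
        (tendsto_natCast_atTop_cobounded.comp (tendsto_add_atTop_nat 1)))
    have hshift := ((ih hs' (by simp at hk ⊢; linarith)).sub_const s⁻¹).add htail
    rw [digamma_apply_add_one s hs, add_sub_cancel_right, add_zero] at hshift
    refine hshift.congr fun n => ?_
    rw [digammaSeq_add_one]
    ring

lemma digammaSeq_sub_digammaSeq (s t : ℂ) (n : ℕ) :
    digammaSeq t n - digammaSeq s n =
      ∑ j ∈ Finset.range (n + 1), ((s + j)⁻¹ - (t + j)⁻¹) := by
  rw [Finset.sum_sub_distrib, digammaSeq, digammaSeq]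
  ring

end Digamma

section Estimates

variable {s t : ℂ}

lemma norm_inv_sub_inv_le (hs : s ≠ 0) (ht : 1 ≤ ‖t‖) :
    ‖s⁻¹ - t⁻¹‖ ≤ ‖t - s‖ * (1 + ‖t - s‖) * (‖s‖ ^ 2)⁻¹ := by
  have ht0 : 0 < ‖t‖ := one_pos.trans_le ht
  have hs0 : 0 < ‖s‖ := norm_pos_iff.2 hs
  have hst : ‖s‖ ≤ (1 + ‖t - s‖) * ‖t‖ :=
    calc ‖s‖ ≤ ‖t‖ + ‖t - s‖ := norm_le_insert t s
      _ ≤ ‖t‖ + ‖t - s‖ * ‖t‖ := by gcongr; exact le_mul_of_one_le_right (norm_nonneg _) ht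
      _ = (1 + ‖t - s‖) * ‖t‖ := by ring
  calc ‖s⁻¹ - t⁻¹‖ = ‖t - s‖ * (‖s‖⁻¹ * ‖t‖⁻¹) := by
        rw [inv_sub_inv hs (norm_pos_iff.1 ht0), norm_div, norm_mul, div_eq_mul_inv, mul_inv]
    _ ≤ ‖t - s‖ * (‖s‖⁻¹ * ((1 + ‖t - s‖) * ‖s‖⁻¹)) := by
        gcongr
        rwa [inv_le_iff_one_le_mul₀ ht0, mul_right_comm, le_mul_inv_iff₀ hs0, one_mul]
    _ = ‖t - s‖ * (1 + ‖t - s‖) * (‖s‖ ^ 2)⁻¹ := by ring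

lemma norm_sq_add_sq_le_norm_add_natCast_sq (hs : 0 ≤ s.re) (j : ℕ) :
    ‖s‖ ^ 2 + (j : ℝ) ^ 2 ≤ ‖s + j‖ ^ 2 := by
  simp only [Complex.sq_norm, normSq_apply, add_re, add_im, natCast_re, natCast_im, add_zero]
  nlinarith [mul_nonneg hs j.cast_nonneg]

lemma inv_norm_add_natCast_sq_le_inv_sub_inv (hs : 0 ≤ s.re) (hs1 : 1 ≤ ‖s‖) (j : ℕ) :
    (‖s + j‖ ^ 2)⁻¹ ≤ 4 * ((‖s‖ + j)⁻¹ - (‖s‖ + (j + 1 : ℕ))⁻¹) := by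
  have hsq := norm_sq_add_sq_le_norm_add_natCast_sq hs j
  have hpos : 0 < ‖s‖ + j := by positivity
  calc (‖s + j‖ ^ 2)⁻¹ ≤ ((‖s‖ + j) * (‖s‖ + j + 1) / 4)⁻¹ := by
        gcongr
        nlinarith [sq_nonneg (‖s‖ - j)]
    _ = 4 * ((‖s‖ + j)⁻¹ - (‖s‖ + (j + 1 : ℕ))⁻¹) := by
        rw [Nat.cast_succ, ← add_assoc, inv_sub_inv hpos.ne' (by positivity), add_sub_cancel_left,
          inv_div, mul_one_div]

lemma sum_inv_norm_add_natCast_sq_le (hs : 0 ≤ s.re) (hs1 : 1 ≤ ‖s‖) (n : ℕ) :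
    ∑ j ∈ Finset.range n, (‖s + j‖ ^ 2)⁻¹ ≤ 4 * ‖s‖⁻¹ := by
  calc ∑ j ∈ Finset.range n, (‖s + j‖ ^ 2)⁻¹
      ≤ ∑ j ∈ Finset.range n, 4 * ((‖s‖ + j)⁻¹ - (‖s‖ + (j + 1 : ℕ))⁻¹) :=
        Finset.sum_le_sum fun j _ => inv_norm_add_natCast_sq_le_inv_sub_inv hs hs1 j
    _ = 4 * (‖s‖⁻¹ - (‖s‖ + n)⁻¹) := by
        rw [← Finset.mul_sum, Finset.sum_range_sub' fun j : ℕ => (‖s‖ + j)⁻¹, Nat.cast_zero,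
          add_zero]
    _ ≤ 4 * ‖s‖⁻¹ := by
        gcongr
        exact sub_le_self _ (by positivity)

theorem norm_digamma_sub_digamma_le (hs : 0 ≤ s.re) (hs1 : 1 ≤ ‖s‖)
    (ht : ∀ j : ℕ, 1 ≤ ‖t + j‖) :
    ‖digamma t - digamma s‖ ≤ 4 * ‖t - s‖ * (1 + ‖t - s‖) / ‖s‖ := by
  have hs0 (j : ℕ) : s + j ≠ 0 := by
    have hsq := norm_sq_add_sq_le_norm_add_natCast_sq hs j
    have hpos : 0 < ‖s + j‖ ^ 2 := by nlinarith [sq_nonneg (j : ℝ)]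
    exact norm_ne_zero_iff.1 (ne_zero_pow two_ne_zero hpos.ne')
  have ht0 (j : ℕ) : t + j ≠ 0 := norm_pos_iff.1 (one_pos.trans_le (ht j))
  have hlim := (tendsto_digammaSeq fun j => eq_neg_iff_add_eq_zero.not.2 (ht0 j)).sub
    (tendsto_digammaSeq fun j => eq_neg_iff_add_eq_zero.not.2 (hs0 j))
  refine le_of_tendsto hlim.norm (Eventually.of_forall fun n => ?_)
  calc ‖digammaSeq t n - digammaSeq s n‖
      ≤ ∑ j ∈ Finset.range (n + 1), ‖(s + j)⁻¹ - (t + j)⁻¹‖ := by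
        rw [digammaSeq_sub_digammaSeq]
        exact norm_sum_le _ _
    _ ≤ ∑ j ∈ Finset.range (n + 1), ‖t - s‖ * (1 + ‖t - s‖) * (‖s + j‖ ^ 2)⁻¹ :=
        Finset.sum_le_sum fun j _ => by
          simpa only [add_sub_add_right_eq_sub] using norm_inv_sub_inv_le (hs0 j) (ht j)
    _ ≤ ‖t - s‖ * (1 + ‖t - s‖) * (4 * ‖s‖⁻¹) := by
        rw [← Finset.mul_sum]
        gcongr
        exact sum_inv_norm_add_natCast_sq_le hs hs1 _
    _ = 4 * ‖t - s‖ * (1 + ‖t - s‖) / ‖s‖ := by ring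

end Estimates

theorem stmt19_general (a : ℂ) (ha : 0 ≤ a.im) :
    ∃ C : ℝ, 0 < C ∧
      ∀ l : ℝ, 1 ≤ l →
        DifferentiableAt ℂ Gamma (I * l) ∧
        DifferentiableAt ℂ Gamma (a + I * l) ∧
        Gamma (I * l) ≠ 0 ∧
        Gamma (a + I * l) ≠ 0 ∧
        ‖deriv Gamma (a + I * l) / Gamma (a + I * l) - deriv Gamma (I * l) / Gamma (I * l)‖ ≤
          C / l := by
  refine ⟨4 * ‖a‖ * (1 + ‖a‖) + 1, by positivity, fun l hl => ?_⟩
  have hfar {b : ℂ} (hb : 0 ≤ b.im) (j : ℕ) : 1 ≤ ‖b + I * l + j‖ := by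
    refine le_trans ?_ ((le_abs_self _).trans (abs_im_le_norm _))
    simpa using hl.trans (le_add_of_nonneg_left hb)
  have hpole {b : ℂ} (hb : 0 ≤ b.im) (j : ℕ) : b + I * l ≠ -j :=
    eq_neg_iff_add_eq_zero.not.2 (norm_pos_iff.1 (one_pos.trans_le (hfar hb j)))
  have hpole0 (j : ℕ) : I * (l : ℂ) ≠ -j := by simpa using hpole (b := 0) le_rfl j
  have hnorm : ‖I * (l : ℂ)‖ = l := by simp [abs_of_pos (one_pos.trans_le hl)]
  have hbound := norm_digamma_sub_digamma_le (by simp) (hnorm ▸ hl) (hfar ha)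
  rw [add_sub_cancel_right, hnorm] at hbound
  refine ⟨differentiableAt_Gamma _ hpole0, differentiableAt_Gamma _ (hpole ha),
    Gamma_ne_zero hpole0, Gamma_ne_zero (hpole ha), hbound.trans ?_⟩
  gcongr
  exact le_add_of_nonneg_right zero_le_one

theorem stmt19 (a : ℝ) (ha : 0 < a) :
    ∃ C : ℝ, 0 < C ∧
      ∀ l : ℝ, 1 ≤ l →
        DifferentiableAt ℂ Complex.Gamma (Complex.I * (l : ℂ)) ∧
        DifferentiableAt ℂ Complex.Gamma ((a : ℂ) + Complex.I * (l : ℂ)) ∧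
        Complex.Gamma (Complex.I * (l : ℂ)) ≠ 0 ∧
        Complex.Gamma ((a : ℂ) + Complex.I * (l : ℂ)) ≠ 0 ∧
        ‖deriv Complex.Gamma ((a : ℂ) + Complex.I * (l : ℂ)) /
              Complex.Gamma ((a : ℂ) + Complex.I * (l : ℂ)) -
            deriv Complex.Gamma (Complex.I * (l : ℂ)) /
              Complex.Gamma (Complex.I * (l : ℂ))‖ ≤ C / l :=
  stmt19_general a (ofReal_im a).ge
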